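/- Let m ≥ 1, n = 2m+1, and let a₁,…,aₙ be real numbers, not all zero. Define G : (0,∞) → ℝ by G(t) = t^{2m−1} ∫_{S^{2m}} cos(tω₁a₁)⋯cos(tωₙaₙ) dσ(ω). Then for every t > 0, sin(t·√(a₁²+⋯+aₙ²)) / √(a₁²+⋯+aₙ²) = (1/(2(2π)^m)) · (D^{m−1}G)(t). -/

import Mathlib

open MeasureTheory Real

/-- The operator `(Df)(t) = f'(t)/t` on real-valued functions. -/
noncomputable def Dop (f : ℝ → ℝ) : ℝ → ℝ := fun t => deriv f t / t

/-!
Integrating `⟪u, x⟫ ^ (2 * k) * exp (-‖x‖ ^ 2)` over an `n`-dimensional Euclidean space, once in an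
orthonormal basis containing `u` and once in polar coordinates, yields the even moments of a linear
form on the unit sphere. Summed against the cosine series they give
`∫ cos ⟪a, ω⟫ = 2 π ^ (n / 2) C_{n/2-1}(-‖a‖² / 4)` with `C_ν` the Bessel–Clifford function. A
product of cosines is the average of `cos (∑ ± aᵢ ωᵢ)` over all signs, and every `(± aᵢ)` has the
norm of `a`, so `∏ cos (aᵢ ωᵢ)` has the same integral.

The relations `C_ν' = C_{ν+1}` and `ν C_ν + x C_{ν+1} = C_{ν-1}` show that `D` maps
`t ^ (2ν) C_ν(c t²)` to `2 t ^ (2(ν-1)) C_{ν-1}(c t²)`. Starting from `ν = n / 2 - 1 = m - 1 / 2`,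
`m - 1` steps lead to `C_{1/2}`, which is a sine: `x C_{1/2}(-x² / 4) = (2 / √π) sin x`.
-/

open Module Set Filter
open scoped Nat

/-- The Bessel–Clifford function `C_ν(x) = ∑ xᵏ / (k! Γ(ν + k + 1))`, in terms of which the Bessel
function is `J_ν(x) = (x / 2) ^ ν * C_ν(-x² / 4)`. At the poles of `Γ` the junk value `1 / 0 = 0`
is the value `1 / Γ = 0` wanted here, so every real `ν` is allowed. -/
noncomputable def besselClifford (ν x : ℝ) : ℝ :=
  ∑' k : ℕ, x ^ k / (k ! * Gamma (ν + k + 1))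

lemma hasSum_besselClifford (ν x : ℝ) :
    HasSum (fun k : ℕ => x ^ k / (k ! * Gamma (ν + k + 1))) (besselClifford ν x) := by
  refine Summable.hasSum (.of_norm_bounded_eventually_nat (summable_pow_div_factorial |x|) ?_)
  filter_upwards [eventually_ge_atTop ⌈1 - ν⌉₊] with k hk
  have hk' : 2 ≤ ν + k + 1 := by linarith [Nat.ceil_le.1 hk]
  have hGamma : 1 ≤ Gamma (ν + k + 1) := by
    simpa [Gamma_two] using Gamma_strictMonoOn_Ici.monotoneOn self_mem_Ici hk' hk'
  rw [norm_div, norm_pow, norm_mul, norm_of_nonneg (zero_le_one.trans hGamma), norm_eq_abs,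
    RCLike.norm_natCast]
  gcongr
  exact le_mul_of_one_le_right (by positivity) hGamma

lemma hasSum_besselClifford_add_one (ν x : ℝ) :
    HasSum (fun k : ℕ => k * x ^ (k - 1) / (k ! * Gamma (ν + k + 1)))
      (besselClifford (ν + 1) x) := by
  rw [← hasSum_nat_add_iff' 1, Finset.sum_range_one, Nat.cast_zero, zero_mul, zero_div, sub_zero]
  convert! hasSum_besselClifford (ν + 1) x using 2 with k
  rw [Nat.factorial_succ, Nat.add_sub_cancel, Nat.cast_mul, mul_assoc,
    mul_div_mul_left _ _ (by positivity), Nat.cast_succ, add_right_comm ν 1, ← add_assoc]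

lemma hasDerivAt_besselClifford (ν x : ℝ) :
    HasDerivAt (besselClifford ν) (besselClifford (ν + 1) x) x := by
  rw [← (hasSum_besselClifford_add_one ν x).tsum_eq]
  refine hasDerivAt_tsum_of_isPreconnected (t := Metric.ball 0 (|x| + 1)) (y₀ := x)
    (hasSum_besselClifford_add_one ν (|x| + 1)).summable.norm Metric.isOpen_ball
    (convex_ball _ _).isPreconnected (fun k y _ => (hasDerivAt_pow k y).div_const _)
    (fun k y hy => ?_) (by simp) (hasSum_besselClifford ν x).summable (by simp)
  have hy' : |y| ≤ |(|x| + 1)| := by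
    simpa using (Metric.mem_ball.1 hy).le.trans (le_abs_self _)
  simp only [norm_div, norm_mul, norm_pow, norm_eq_abs]
  gcongr

lemma inv_Gamma_eq_mul_inv_Gamma_add_one (s : ℝ) : (Gamma s)⁻¹ = s * (Gamma (s + 1))⁻¹ := by
  have h := Complex.one_div_Gamma_eq_self_mul_one_div_Gamma_add_one s
  rw [← Complex.ofReal_one, ← Complex.ofReal_add, Complex.Gamma_ofReal, Complex.Gamma_ofReal] at h
  exact_mod_cast h

lemma mul_besselClifford_add_mul_besselClifford_add_one (ν x : ℝ) :
    ν * besselClifford ν x + x * besselClifford (ν + 1) x = besselClifford (ν - 1) x := by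
  refine HasSum.unique (((hasSum_besselClifford ν x).mul_left ν).add
    ((hasSum_besselClifford_add_one ν x).mul_left x)) ?_
  convert! hasSum_besselClifford (ν - 1) x using 2 with k
  have hGamma : (Gamma (ν - 1 + k + 1))⁻¹ = (ν + k) * (Gamma (ν + k + 1))⁻¹ := by
    rw [← inv_Gamma_eq_mul_inv_Gamma_add_one]
    ring_nf
  have hpow : x * (k * x ^ (k - 1)) = k * x ^ k := by
    cases k with
    | zero => simp
    | succ k => rw [Nat.add_sub_cancel, pow_succ' x k, mul_left_comm]
  rw [← mul_div_assoc x, hpow]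
  simp only [div_eq_mul_inv, mul_inv, hGamma]
  ring

lemma factorial_mul_Gamma_nat_add_half (k : ℕ) :
    k ! * Gamma (k + 1 / 2) = (2 * k)! * √π / 4 ^ k := by
  have h := Gamma_mul_Gamma_add_half (k + 1 / 2)
  rw [show (k + 1 / 2 + 1 / 2 : ℝ) = k + 1 by ring, Gamma_nat_eq_factorial,
    show (2 * (k + 1 / 2) : ℝ) = (2 * k : ℕ) + 1 by push_cast; ring, Gamma_nat_eq_factorial,
    show (1 - ((2 * k : ℕ) + 1) : ℝ) = -(2 * k : ℕ) by ring, rpow_neg zero_le_two, rpow_natCast,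
    pow_mul] at h
  rw [mul_comm, h]
  ring

lemma mul_besselClifford_half (x : ℝ) :
    x * besselClifford (1 / 2) (-x ^ 2 / 4) = 2 / √π * sin x := by
  refine ((hasSum_besselClifford _ _).mul_left x).unique ?_
  convert! (hasSum_sin x).mul_left (2 / √π) using 2 with k
  have hGamma : k ! * Gamma (1 / 2 + k + 1) = (2 * k + 1)! * √π / (2 * 4 ^ k) := by
    rw [add_comm (1 / 2 : ℝ), Gamma_add_one (by positivity), mul_left_comm,
      factorial_mul_Gamma_nat_add_half, Nat.factorial_succ]
    push_cast
    ring
  rw [hGamma, div_pow, neg_pow (x ^ 2)]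
  field_simp
  ring

lemma sin_mul_sqrt_div_sqrt {s : ℝ} (hs : 0 < s) (t : ℝ) :
    sin (t * √s) / √s = √π / 2 * (t * besselClifford (1 / 2) (-s / 4 * t ^ 2)) := by
  have hsin := mul_besselClifford_half (t * √s)
  rw [mul_pow, sq_sqrt hs.le, show -(t ^ 2 * s) / 4 = -s / 4 * t ^ 2 by ring] at hsin
  field_simp at hsin ⊢
  linarith

lemma Dop_rpow_mul_besselClifford (ν c : ℝ) {t : ℝ} (ht : 0 < t) :
    Dop (fun s => s ^ (2 * ν) * besselClifford ν (c * s ^ 2)) t =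
      2 * (t ^ (2 * (ν - 1)) * besselClifford (ν - 1) (c * t ^ 2)) := by
  have hderiv : HasDerivAt (fun s => s ^ (2 * ν) * besselClifford ν (c * s ^ 2))
      (2 * ν * t ^ (2 * ν - 1) * besselClifford ν (c * t ^ 2) +
        t ^ (2 * ν) * (besselClifford (ν + 1) (c * t ^ 2) * (c * (2 * t)))) t := by
    have hinner : HasDerivAt (fun s => c * s ^ 2) (c * (2 * t)) t := by
      simpa using (hasDerivAt_pow 2 t).const_mul c
    exact (hasDerivAt_rpow_const (.inl ht.ne')).fun_mul
      ((hasDerivAt_besselClifford ν (c * t ^ 2)).comp_of_eq t hinner rfl)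
  have hpow₁ : t ^ (2 * ν - 1) = t ^ (2 * (ν - 1)) * t := by
    rw [← rpow_add_one ht.ne']
    ring_nf
  have hpow₂ : t ^ (2 * ν) = t ^ (2 * (ν - 1)) * t ^ 2 := by
    rw [← rpow_natCast, ← rpow_add ht]
    push_cast
    ring_nf
  rw [Dop, hderiv.deriv, hpow₁, hpow₂, ← mul_besselClifford_add_mul_besselClifford_add_one]
  field_simp

lemma Dop_const_mul (c : ℝ) (f : ℝ → ℝ) : Dop (fun t => c * f t) = fun t => c * Dop f t := by
  ext t
  rw [Dop, Dop, deriv_const_mul_field, mul_div_assoc]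

lemma Dop_eqOn {f g : ℝ → ℝ} {s : Set ℝ} (hfg : EqOn f g s) (hs : IsOpen s) :
    EqOn (Dop f) (Dop g) s := fun t ht => by
  rw [Dop, Dop, hfg.deriv hs ht]

lemma iterate_Dop_rpow_mul_besselClifford_eqOn {ν c A : ℝ} {f : ℝ → ℝ}
    (hf : EqOn f (fun t => A * (t ^ (2 * ν) * besselClifford ν (c * t ^ 2))) (Ioi 0)) (j : ℕ) :
    EqOn (Dop^[j] f)
      (fun t => 2 ^ j * A * (t ^ (2 * (ν - j)) * besselClifford (ν - j) (c * t ^ 2))) (Ioi 0) := by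
  induction j with
  | zero => simpa using hf
  | succ j ih =>
    intro t ht
    rw [Function.iterate_succ_apply', Dop_eqOn ih isOpen_Ioi ht, Dop_const_mul]
    simp only [Dop_rpow_mul_besselClifford _ _ ht, Nat.cast_succ, ← sub_sub]
    ring

lemma integral_volumeIoiPow {F : Type*} [NormedAddCommGroup F] [NormedSpace ℝ F] (n : ℕ)
    (f : ℝ → F) : ∫ r : Ioi (0 : ℝ), f r ∂(Measure.volumeIoiPow n) =
      ∫ r in Ioi (0 : ℝ), r ^ n • f r := by
  simp only [Measure.volumeIoiPow, ENNReal.ofReal]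
  rw [integral_withDensity_eq_integral_smul (measurable_subtype_coe.pow_const _).real_toNNReal,
    integral_subtype_comap measurableSet_Ioi fun r => (r ^ n).toNNReal • f r]
  refine setIntegral_congr_fun measurableSet_Ioi fun r hr => ?_
  rw [NNReal.smul_def, coe_toNNReal _ (pow_nonneg (mem_Ioi.1 hr).le _)]

section PolarCoordinates

variable {E : Type*} [NormedAddCommGroup E] [NormedSpace ℝ E] [FiniteDimensional ℝ E]
  [MeasurableSpace E] [BorelSpace E]

lemma integral_homogeneous_mul_fun_norm [Nontrivial E] (μ : Measure E) [μ.IsAddHaarMeasure]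
    {f : E → ℝ} {p : ℕ} (hf : ∀ r > 0, ∀ x, f (r • x) = r ^ p * f x) (g : ℝ → ℝ) :
    ∫ x, f x * g ‖x‖ ∂μ = (∫ ω : Metric.sphere (0 : E) 1, f ω ∂μ.toSphere) *
      ∫ r in Ioi (0 : ℝ), r ^ (finrank ℝ E - 1 + p) * g r := by
  calc
    _ = ∫ x : ({0}ᶜ : Set E), f x * g ‖(x : E)‖ ∂(μ.comap (↑)) := by
      rw [integral_subtype_comap (measurableSet_singleton _).compl fun x : E => f x * g ‖x‖,
        restrict_compl_singleton]
    _ = ∫ y : Metric.sphere (0 : E) 1 × Ioi (0 : ℝ), f y.1 * ((y.2 : ℝ) ^ p * g y.2)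
          ∂μ.toSphere.prod (.volumeIoiPow (finrank ℝ E - 1)) := by
      rw [← μ.measurePreserving_homeomorphUnitSphereProd.integral_comp
        (Homeomorph.measurableEmbedding _)]
      refine integral_congr_ae (.of_forall fun x => ?_)
      have hx : 0 < ‖(x : E)‖ := norm_pos_iff.2 x.2
      have hfx : f x = ‖(x : E)‖ ^ p * f (‖(x : E)‖⁻¹ • x) := by
        rw [← hf _ hx, smul_inv_smul₀ hx.ne']
      simp only [homeomorphUnitSphereProd_apply_fst_coe, homeomorphUnitSphereProd_apply_snd_coe]
      rw [hfx]
      ring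
    _ = _ := by
      rw [integral_prod_mul (fun ω : Metric.sphere (0 : E) 1 => f ω)
        (fun r : Ioi (0 : ℝ) => (r : ℝ) ^ p * g r), integral_volumeIoiPow _ fun r => r ^ p * g r]
      simp only [smul_eq_mul, pow_add, mul_assoc]

end PolarCoordinates

lemma integral_Ioi_pow_mul_exp_neg_sq (p : ℕ) :
    ∫ x in Ioi (0 : ℝ), x ^ p * exp (-x ^ 2) = Gamma ((p + 1) / 2) / 2 := by
  have h := integral_rpow_mul_exp_neg_rpow (p := 2) (q := p) two_pos
    (neg_one_lt_zero.trans_le p.cast_nonneg)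
  simpa only [rpow_natCast, rpow_two, one_div_mul_eq_div] using h

lemma integral_pow_two_mul_mul_exp_neg_sq (k : ℕ) :
    ∫ x : ℝ, x ^ (2 * k) * exp (-x ^ 2) = Gamma (k + 1 / 2) := by
  have habs := integral_comp_abs (f := fun x => x ^ (2 * k) * exp (-x ^ 2))
  simp only [pow_mul, sq_abs] at habs ⊢
  rw [habs]
  simp only [← pow_mul]
  rw [integral_Ioi_pow_mul_exp_neg_sq, mul_div_cancel₀ _ two_ne_zero]
  congr 1
  push_cast
  ring

section InnerProductSpace

variable {E : Type*} [NormedAddCommGroup E] [InnerProductSpace ℝ E] [FiniteDimensional ℝ E]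
  [MeasurableSpace E] [BorelSpace E]

lemma integral_prod_inner_orthonormalBasis {ι : Type*} [Fintype ι] (b : OrthonormalBasis ι ℝ E)
    (f : ι → ℝ → ℝ) : ∫ x, ∏ i, f i (inner ℝ (b i) x) = ∏ i, ∫ s, f i s := by
  rw [← integral_fintype_prod_volume_eq_prod,
    ← (EuclideanSpace.volume_preserving_symm_measurableEquiv_toLp ι).integral_comp
      (MeasurableEquiv.measurableEmbedding _),
    ← b.measurePreserving_measurableEquiv.integral_comp (MeasurableEquiv.measurableEmbedding _)]
  simp [OrthonormalBasis.measurableEquiv, b.repr_apply_apply]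

lemma integral_inner_pow_mul_exp_neg_norm_sq {u : E} (hu : ‖u‖ = 1) (k : ℕ) :
    ∫ x, inner ℝ u x ^ (2 * k) * exp (-‖x‖ ^ 2) =
      Gamma (k + 1 / 2) * √π ^ (finrank ℝ E - 1) := by
  classical
  have horth : Orthonormal ℝ ((↑) : ({u} : Set E) → E) :=
    ⟨by rintro ⟨_, rfl⟩; exact hu, fun i j hij => absurd (Subsingleton.elim i j) hij⟩
  obtain ⟨s, b, hus, hb⟩ := horth.exists_orthonormalBasis_extension
  let i₀ : s := ⟨u, hus rfl⟩
  let f (i : s) (x : ℝ) : ℝ := x ^ (2 * if i = i₀ then k else 0) * exp (-x ^ 2)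
  have hf (x : E) : inner ℝ u x ^ (2 * k) * exp (-‖x‖ ^ 2) = ∏ i, f i (inner ℝ (b i) x) := by
    simp only [f, Finset.prod_mul_distrib, ← exp_sum, Finset.sum_neg_distrib, b.sum_sq_inner_right]
    simp [hb, i₀]
  simp only [hf, integral_prod_inner_orthonormalBasis]
  simp only [f, integral_pow_two_mul_mul_exp_neg_sq]
  rw [← Finset.mul_prod_erase _ _ (Finset.mem_univ i₀), if_pos rfl, finrank_eq_card_basis b.toBasis,
    ← Finset.card_univ, ← Finset.card_erase_of_mem (Finset.mem_univ i₀)]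
  congr 1
  refine Finset.prod_eq_pow_card fun i hi => ?_
  rw [if_neg (Finset.ne_of_mem_erase hi), Nat.cast_zero, zero_add, Gamma_one_half_eq]

lemma integral_sphere_inner_pow [Nontrivial E] (a : E) (k : ℕ) :
    ∫ ω : Metric.sphere (0 : E) 1, inner ℝ a (ω : E) ^ (2 * k) ∂(volume : Measure E).toSphere =
      ‖a‖ ^ (2 * k) *
        (2 * √π ^ (finrank ℝ E - 1) * Gamma (k + 1 / 2) / Gamma (k + finrank ℝ E / 2)) := by
  obtain ⟨u, hu, hau⟩ : ∃ u : E, ‖u‖ = 1 ∧ a = ‖a‖ • u := by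
    rcases eq_or_ne a 0 with rfl | ha
    · simpa using exists_norm_eq E zero_le_one
    · exact ⟨‖a‖⁻¹ • a, norm_smul_inv_norm ha, (smul_inv_smul₀ (norm_ne_zero_iff.2 ha) a).symm⟩
  have hpolar := integral_homogeneous_mul_fun_norm (volume : Measure E)
    (f := fun x => inner ℝ u x ^ (2 * k)) (p := 2 * k)
    (fun r _ x => by rw [real_inner_smul_right, mul_pow]) (fun r => exp (-r ^ 2))
  have hexponent : ((finrank ℝ E - 1 + 2 * k : ℕ) + 1 : ℝ) / 2 = k + finrank ℝ E / 2 := by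
    rw [Nat.cast_add, Nat.cast_pred finrank_pos]
    push_cast
    ring
  rw [integral_inner_pow_mul_exp_neg_norm_sq hu, integral_Ioi_pow_mul_exp_neg_sq, hexponent]
    at hpolar
  have hGamma : Gamma (k + finrank ℝ E / 2) ≠ 0 :=
    (Gamma_pos_of_pos (by have := finrank_pos (R := ℝ) (M := E); positivity)).ne'
  have hinner (x : E) : inner ℝ a x = ‖a‖ * inner ℝ u x := by
    conv_lhs => rw [hau, real_inner_smul_left]
  simp only [hinner, mul_pow, integral_const_mul]
  congr 1
  rw [eq_div_iff hGamma]
  linarith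

lemma integral_sphere_cos_inner [Nontrivial E] (a : E) :
    ∫ ω : Metric.sphere (0 : E) 1, cos (inner ℝ a (ω : E)) ∂(volume : Measure E).toSphere =
      2 * √π ^ finrank ℝ E * besselClifford (finrank ℝ E / 2 - 1) (-‖a‖ ^ 2 / 4) := by
  have hseries := hasSum_integral_of_dominated_convergence (μ := (volume : Measure E).toSphere)
    (F := fun (k : ℕ) ω => (-1) ^ k * inner ℝ a (ω : E) ^ (2 * k) / (2 * k)!)
    (f := fun ω => cos (inner ℝ a (ω : E)))
    (fun k _ => ‖a‖ ^ (2 * k) / (2 * k)!)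
    (fun k => Continuous.aestronglyMeasurable (by fun_prop))
    (fun k => .of_forall fun ω => ?_)
    (.of_forall fun _ => (hasSum_cosh _).summable)
    (integrable_const _)
    (.of_forall fun ω => hasSum_cos _)
  · refine hseries.unique ?_
    convert! (hasSum_besselClifford _ _).mul_left (2 * √π ^ finrank ℝ E) using 2 with k
    have hGamma : Gamma (k + 1 / 2) = (2 * k)! * √π / (4 ^ k * k !) := by
      rw [← div_div, ← factorial_mul_Gamma_nat_add_half]
      field_simp
    have hsqrt : √π ^ finrank ℝ E = √π * √π ^ (finrank ℝ E - 1) :=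
      (mul_pow_sub_one finrank_pos.ne' _).symm
    rw [integral_div, integral_const_mul, integral_sphere_inner_pow, hGamma, hsqrt,
      show (finrank ℝ E / 2 - 1 + k + 1 : ℝ) = k + finrank ℝ E / 2 by ring, div_pow,
      neg_pow (‖a‖ ^ 2), ← pow_mul]
    field_simp
  · have hinner : |inner ℝ a (ω : E)| ≤ ‖a‖ := by
      simpa using abs_real_inner_le_norm a (ω : E)
    simp only [norm_div, norm_mul, norm_pow, norm_neg, norm_one, one_pow, one_mul,
      norm_eq_abs, Nat.abs_cast]
    gcongr

end InnerProductSpace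

lemma prod_cos_eq_sum_cos {ι : Type*} [Fintype ι] [DecidableEq ι] (x : ι → ℝ) :
    ∏ i, cos (x i) = (∑ ε : ι → ℤˣ, cos (∑ i, (ε i : ℤ) * x i)) / 2 ^ Fintype.card ι := by
  have hexp (y : ℝ) :
      (cos y : ℂ) = (∑ ε : ℤˣ, Complex.exp (((ε : ℤ) * y : ℝ) * Complex.I)) / 2 := by
    rw [Complex.ofReal_cos, Complex.cos, UnitsInt.univ, Finset.sum_pair (by decide)]
    simp
  have h : ((∏ i, cos (x i) : ℝ) : ℂ) =
      (∑ ε : ι → ℤˣ, Complex.exp ((∑ i, (ε i : ℤ) * x i : ℝ) * Complex.I)) /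
        (2 ^ Fintype.card ι : ℝ) := by
    simp_rw [Complex.ofReal_prod, hexp, Finset.prod_div_distrib, Finset.prod_univ_sum,
      ← Complex.exp_sum, ← Finset.sum_mul, ← Complex.ofReal_sum, Fintype.piFinset_univ]
    simp
  simpa only [Complex.ofReal_re, Complex.div_ofReal_re, Complex.re_sum,
    Complex.exp_ofReal_mul_I_re] using congr_arg Complex.re h

lemma integral_sphere_prod_cos {ι : Type*} [Fintype ι] [Nonempty ι] (a : ι → ℝ) :
    ∫ ω : Metric.sphere (0 : EuclideanSpace ℝ ι) 1, ∏ i, cos ((ω : EuclideanSpace ℝ ι) i * a i)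
        ∂(volume : Measure (EuclideanSpace ℝ ι)).toSphere =
      2 * √π ^ Fintype.card ι *
        besselClifford (Fintype.card ι / 2 - 1) (-(∑ i, a i ^ 2) / 4) := by
  classical
  let A (ε : ι → ℤˣ) : EuclideanSpace ℝ ι := WithLp.toLp 2 fun i => (ε i : ℤ) * a i
  have hnorm (ε : ι → ℤˣ) : ‖A ε‖ ^ 2 = ∑ i, a i ^ 2 := by
    simp [A, EuclideanSpace.real_norm_sq_eq, mul_pow, ← Int.cast_pow, ← Units.val_pow_eq_pow_val]
  have hprod (ω : EuclideanSpace ℝ ι) :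
      ∏ i, cos (ω i * a i) = (∑ ε, cos (inner ℝ (A ε) ω)) / 2 ^ Fintype.card ι := by
    rw [prod_cos_eq_sum_cos]
    simp [A, PiLp.inner_apply, mul_left_comm]
  simp only [hprod, integral_div]
  rw [integral_finsetSum]
  · simp [integral_sphere_cos_inner, hnorm]
  · exact fun ε _ => .of_bound (Continuous.aestronglyMeasurable (by fun_prop)) 1
      (.of_forall fun ω => abs_cos_le_one _)

lemma iterate_Dop_integral_sphere_prod_cos {ι : Type*} [Fintype ι] [Nonempty ι] (a : ι → ℝ)
    (j : ℕ) {t : ℝ} (ht : 0 < t) :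
    Dop^[j] (fun t => t ^ (Fintype.card ι - 2 : ℝ) *
        ∫ ω : Metric.sphere (0 : EuclideanSpace ℝ ι) 1,
          ∏ i, cos (t * (ω : EuclideanSpace ℝ ι) i * a i)
          ∂(volume : Measure (EuclideanSpace ℝ ι)).toSphere) t =
      2 ^ j * (2 * √π ^ Fintype.card ι) * (t ^ (2 * (Fintype.card ι / 2 - 1 - j : ℝ)) *
        besselClifford (Fintype.card ι / 2 - 1 - j) (-(∑ i, a i ^ 2) / 4 * t ^ 2)) := by
  refine iterate_Dop_rpow_mul_besselClifford_eqOn (fun t _ => ?_) j ht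
  have hnorm : -(∑ i, (t * a i) ^ 2) / 4 = -(∑ i, a i ^ 2) / 4 * t ^ 2 := by
    simp only [mul_pow, ← Finset.mul_sum]
    ring
  simp only [mul_right_comm t, mul_comm (t * _)]
  rw [integral_sphere_prod_cos, hnorm]
  ring_nf

theorem stmt10 (m : ℕ) (hm : 1 ≤ m) (a : Fin (2*m+1) → ℝ) (ha : a ≠ 0)
    (G : ℝ → ℝ)
    (hG : ∀ t : ℝ, G t = t ^ (2*m-1) *
      ∫ ω : Metric.sphere (0 : EuclideanSpace ℝ (Fin (2*m+1))) 1,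
        ∏ i, Real.cos (t * (ω : EuclideanSpace ℝ (Fin (2*m+1))) i * a i)
        ∂((volume : Measure (EuclideanSpace ℝ (Fin (2*m+1)))).toSphere)) :
    ∀ t ∈ Set.Ioi (0:ℝ),
      Real.sin (t * Real.sqrt (∑ i, (a i)^2)) / Real.sqrt (∑ i, (a i)^2) =
        (1 / (2 * (2*π)^m)) * (Dop^[m-1] G) t := by
  intro t ht
  have hsum : 0 < ∑ i, a i ^ 2 := by
    obtain ⟨i, hi⟩ := Function.ne_iff.1 ha
    exact Finset.sum_pos' (fun i _ => sq_nonneg _) ⟨i, Finset.mem_univ i, sq_pos_of_ne_zero hi⟩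
  have hG_rpow : G = fun t => t ^ (Fintype.card (Fin (2 * m + 1)) - 2 : ℝ) *
      ∫ ω : Metric.sphere (0 : EuclideanSpace ℝ (Fin (2 * m + 1))) 1,
        ∏ i, cos (t * (ω : EuclideanSpace ℝ (Fin (2 * m + 1))) i * a i)
        ∂(volume : Measure (EuclideanSpace ℝ (Fin (2 * m + 1)))).toSphere := by
    ext t
    rw [hG, ← rpow_natCast, Nat.cast_sub (by omega), Fintype.card_fin]
    push_cast
    ring_nf
  have hν : (Fintype.card (Fin (2 * m + 1)) / 2 - 1 - (m - 1 : ℕ) : ℝ) = 1 / 2 := by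
    rw [Nat.cast_pred hm, Fintype.card_fin]
    push_cast
    ring
  have hconst : 2 ^ (m - 1) * (2 * √π ^ (2 * m + 1)) = (2 * π) ^ m * √π := by
    rw [← mul_assoc, pow_sub_one_mul (by omega), pow_succ, pow_mul, sq_sqrt pi_nonneg, mul_pow,
      mul_assoc]
  rw [sin_mul_sqrt_div_sqrt hsum, hG_rpow, iterate_Dop_integral_sphere_prod_cos a _ ht, hν,
    Fintype.card_fin, hconst, mul_one_div_cancel two_ne_zero, rpow_one]
  field_simp
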